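/- Let k > 1 be an integer such that k is not of the form 2^t − 1 for any integer t ≥ 2. Then the odd graph O_{k+1} = K(2k+1, k) is not a Cayley graph; that is, no subgroup of the automorphism group of O_{k+1} acts regularly (freely and transitively) on its vertex set. -/

import Mathlib

/-- The Kneser graph `K(n,k)`: vertices are the `k`-element subsets of `Fin n`,
with two vertices adjacent iff the corresponding subsets are disjoint. -/
def kneserGraph (n k : ℕ) : SimpleGraph {s : Finset (Fin n) // s.card = k} :=
  SimpleGraph.fromRel (fun v w => Disjoint v.val w.val)

/-- A graph is a Cayley graph iff some subgroup of its automorphism group acts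
regularly (freely and transitively) on the vertex set. -/
def IsCayleyGraph {V : Type*} (G : SimpleGraph V) : Prop :=
  ∃ H : Subgroup (G ≃g G), ∀ v w : V, ∃! g : H, (g : G ≃g G) v = w

lemma two_dvd_choose_odd (k : ℕ) (h : ¬ ∃ t : ℕ, k + 1 = 2 ^ t) :
    2 ∣ (2 * k + 1).choose k := by
  induction k using Nat.strong_induction_on with
  | _ k ih =>
    have hl := @Choose.choose_modEq_choose_mod_mul_choose_div_nat (2 * k + 1) k 2 ⟨Nat.prime_two⟩
    have e1 : (2 * k + 1) % 2 = 1 := by omega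
    have e2 : (2 * k + 1) / 2 = k := by omega
    rw [e1, e2] at hl
    suffices h2 : 2 ∣ k.choose (k / 2) by
      exact (Nat.modEq_zero_iff_dvd).1 (hl.trans ((Nat.modEq_zero_iff_dvd).2 (Dvd.dvd.mul_left h2 _)))
    rcases Nat.even_or_odd' k with ⟨j, hj | hj⟩
    · have hj0 : j ≠ 0 := by
        rintro rfl
        exact h ⟨0, by simp [hj]⟩
      obtain ⟨i, rfl⟩ := Nat.exists_eq_succ_of_ne_zero hj0
      have : k / 2 = i + 1 := by omega
      rw [this, hj]
      exact Nat.two_dvd_centralBinom_succ i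
    · have : k / 2 = j := by omega
      rw [this, hj]
      apply ih j (by omega)
      rintro ⟨t, ht⟩
      exact h ⟨t + 1, by rw [pow_succ]; omega⟩

lemma exists_invariant_even {n : ℕ} (σ : Fin n → Fin n) (hσ : ∀ x, σ (σ x) = x)
    (p : Fin n) (hp : σ p = p) (j : ℕ) (hj : 2 * j + 1 ≤ n) (hn : Odd n) :
    ∃ T : Finset (Fin n), T.card = 2 * j ∧ p ∉ T ∧ ∀ x ∈ T, σ x ∈ T := by
  induction j with
  | zero => exact ⟨∅, by simp⟩
  | succ j ih =>
    obtain ⟨T, hT, hpT, hinv⟩ := ih (by omega)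
    have hinj : ∀ x y, σ x = σ y → x = y := fun x y hxy => by
      rw [← hσ x, hxy, hσ]
    have hc : (insert p T)ᶜ.card = n - (2 * j + 1) := by
      rw [Finset.card_compl, Finset.card_insert_of_notMem hpT, hT, Fintype.card_fin]
    by_cases hfix : ∃ x, x ∉ insert p T ∧ σ x ≠ x
    · obtain ⟨x, hx, hxx⟩ := hfix
      have hx' : x ≠ p ∧ x ∉ T := by simpa using hx
      have h1 : σ x ∉ T := fun h => hx'.2 (by simpa [hσ] using hinv _ h)
      have h2 : σ x ≠ p := fun h => hx'.1 (hinj _ _ (h.trans hp.symm))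
      refine ⟨insert x (insert (σ x) T), ?_, ?_, ?_⟩
      · rw [Finset.card_insert_of_notMem, Finset.card_insert_of_notMem h1, hT]
        · ring
        · simp [hx'.2, hxx.symm]
      · simp [hpT, hx'.1.symm, h2.symm]
      · intro y hy
        simp only [Finset.mem_insert] at hy ⊢
        rcases hy with rfl | rfl | hy
        · simp
        · simp [hσ]
        · exact Or.inr (Or.inr (hinv _ hy))
    · push Not at hfix
      obtain ⟨x, hx, y, hy, hxy⟩ := Finset.one_lt_card.1 (by omega : 1 < (insert p T)ᶜ.card)
      rw [Finset.mem_compl] at hx hy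
      have fx := hfix x hx
      have fy := hfix y hy
      have hx' : x ≠ p ∧ x ∉ T := by simpa using hx
      have hy' : y ≠ p ∧ y ∉ T := by simpa using hy
      refine ⟨insert x (insert y T), ?_, ?_, ?_⟩
      · rw [Finset.card_insert_of_notMem, Finset.card_insert_of_notMem hy'.2, hT]
        · ring
        · simp [hx'.2, hxy]
      · simp [hpT, hx'.1.symm, hy'.1.symm]
      · intro z hz
        simp only [Finset.mem_insert] at hz ⊢
        rcases hz with rfl | rfl | hz
        · simp [fx]
        · simp [fy]
        · exact Or.inr (Or.inr (hinv _ hz))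

lemma exists_invariant (k : ℕ) (σ : Fin (2 * k + 1) → Fin (2 * k + 1))
    (hσ : ∀ x, σ (σ x) = x) :
    ∃ T : Finset (Fin (2 * k + 1)), T.card = k ∧ ∀ x ∈ T, σ x ∈ T := by
  have hn : Odd (2 * k + 1) := ⟨k, rfl⟩
  have hp : ∃ p, σ p = p := by
    haveI : Fact (Nat.Prime 2) := ⟨Nat.prime_two⟩
    let f : Equiv.Perm (Fin (2 * k + 1)) := ⟨σ, σ, hσ, hσ⟩
    obtain ⟨p, hp⟩ := Equiv.Perm.exists_fixed_point_of_prime (p := 2) (n := 1) (σ := f)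
      (by rw [Fintype.card_fin]; omega) (by ext x; simp [pow_two, f, hσ])
    exact ⟨p, hp⟩
  obtain ⟨p, hp⟩ := hp
  obtain ⟨T, hT, hpT, hinv⟩ := exists_invariant_even σ hσ p hp (k / 2) (by omega) hn
  rcases Nat.even_or_odd' k with ⟨j, hj | hj⟩
  · exact ⟨T, by omega, hinv⟩
  · refine ⟨insert p T, ?_, ?_⟩
    · rw [Finset.card_insert_of_notMem hpT]; omega
    · intro x hx
      rw [Finset.mem_insert] at hx ⊢
      rcases hx with rfl | hx
      · exact Or.inl hp
      · exact Or.inr (hinv _ hx)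

/-- vertices of the odd graph -/
abbrev OddV (k : ℕ) : Type := {s : Finset (Fin (2 * k + 1)) // s.card = k}

lemma kneser_adj (k : ℕ) (hk : 1 < k) (A B : OddV k) :
    (kneserGraph (2 * k + 1) k).Adj A B ↔ Disjoint A.1 B.1 := by
  rw [kneserGraph, SimpleGraph.fromRel_adj]
  constructor
  · rintro ⟨-, h | h⟩
    · exact h
    · exact h.symm
  · intro h
    refine ⟨?_, Or.inl h⟩
    rintro rfl
    have h0 : A.1 = ∅ := by simpa using h
    have := A.2
    rw [h0] at this
    simp at this
    omega

/-- `x` is the point missed by the edge `A B`. -/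
def Missed {k : ℕ} (A B : OddV k) (x : Fin (2 * k + 1)) : Prop :=
  Disjoint A.1 B.1 ∧ x ∉ A.1 ∧ x ∉ B.1

lemma Missed.symm {k : ℕ} {A B : OddV k} {x} (h : Missed A B x) : Missed B A x :=
  ⟨h.1.symm, h.2.2, h.2.1⟩

lemma Missed.cover {k : ℕ} {A B : OddV k} {x} (h : Missed A B x) (y : Fin (2 * k + 1)) :
    y = x ∨ y ∈ A.1 ∨ y ∈ B.1 := by
  have hc : (insert x (A.1 ∪ B.1)).card = Fintype.card (Fin (2 * k + 1)) := by
    rw [Finset.card_insert_of_notMem (by simp [h.2.1, h.2.2]), Finset.card_union_of_disjoint h.1,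
      A.2, B.2, Fintype.card_fin]
    ring
  have := (Finset.card_eq_iff_eq_univ _).1 hc
  have hy : y ∈ insert x (A.1 ∪ B.1) := by rw [this]; simp
  simpa using hy

lemma Missed.unique {k : ℕ} {A B : OddV k} {x y} (h : Missed A B x) (h' : Missed A B y) :
    y = x := by
  rcases h.cover y with h1 | h1 | h1
  · exact h1
  · exact absurd h1 h'.2.1
  · exact absurd h1 h'.2.2

lemma exists_missed_of_disjoint {k : ℕ} (A B : OddV k) (h : Disjoint A.1 B.1) :
    ∃ x, Missed A B x := by
  have : ∃ x, x ∉ A.1 ∪ B.1 := by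
    by_contra hcon
    push Not at hcon
    have hc := congrArg Finset.card (Finset.eq_univ_iff_forall.2 hcon)
    rw [Finset.card_union_of_disjoint h, A.2, B.2, Finset.card_univ, Fintype.card_fin] at hc
    omega
  obtain ⟨x, hx⟩ := this
  rw [Finset.mem_union, not_or] at hx
  exact ⟨x, h, hx.1, hx.2⟩

lemma exists_missed_of_notMem {k : ℕ} (A : OddV k) (x) (h : x ∉ A.1) :
    ∃ B, Missed A B x := by
  refine ⟨⟨(insert x A.1)ᶜ, ?_⟩, ?_, h, ?_⟩
  · rw [Finset.card_compl, Finset.card_insert_of_notMem h, A.2, Fintype.card_fin]; omega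
  · rw [Finset.disjoint_left]; intro a ha; simp [ha]
  · simp

lemma exists_vertex_notMem {k : ℕ} (x : Fin (2 * k + 1)) : ∃ A : OddV k, x ∉ A.1 := by
  obtain ⟨T, hT, hc⟩ := Finset.exists_subset_card_eq (s := ({x} : Finset (Fin (2 * k + 1)))ᶜ)
    (n := k) (by rw [Finset.card_compl, Fintype.card_fin, Finset.card_singleton]; omega)
  exact ⟨⟨T, hc⟩, fun h => by simpa using hT h⟩

/-- exchange -/
lemma oddV_swap {k : ℕ} (A : OddV k) (a b) (ha : a ∈ A.1) (hb : b ∉ A.1) :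
    ∃ A' : OddV k, ∀ y, y ∈ A'.1 ↔ (y = b ∨ (y ≠ a ∧ y ∈ A.1)) := by
  refine ⟨⟨insert b (A.1.erase a), ?_⟩, ?_⟩
  · have := A.2
    have hpos : 0 < A.1.card := Finset.card_pos.2 ⟨a, ha⟩
    rw [Finset.card_insert_of_notMem (by simp [hb]), Finset.card_erase_of_mem ha]
    omega
  · intro y; simp

lemma eq_of_disjoint_of_missed {k : ℕ} {A B C : OddV k} {y} (h : Missed A B y)
    (hd : Disjoint B.1 C.1) (hne : C ≠ A) : y ∈ C.1 := by
  by_contra hy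
  apply hne
  apply Subtype.ext
  apply Finset.eq_of_subset_of_card_le
  · intro z hz
    rcases h.cover z with rfl | h1 | h1
    · exact absurd hz hy
    · exact h1
    · exact absurd hz (Finset.disjoint_left.1 hd h1)
  · rw [A.2, C.2]

lemma step {k : ℕ} (φ : OddV k → OddV k) (hinj : Function.Injective φ)
    (hφ : ∀ A B : OddV k, Disjoint A.1 B.1 → Disjoint (φ A).1 (φ B).1)
    {A B A' B' : OddV k} {x y a b} (h : Missed A B x) (ha : a ∈ A.1) (hb : b ∈ B.1)
    (hA' : ∀ z, z ∈ A'.1 ↔ (z = b ∨ (z ≠ a ∧ z ∈ A.1)))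
    (h' : Missed A' B' x)
    (hy : Missed (φ A) (φ B) y) : Missed (φ A') (φ B') y := by
  obtain ⟨C, hC⟩ := oddV_swap A a x ha h.2.1
  obtain ⟨D, hD⟩ := oddV_swap B b x hb h.2.2
  have dAB := Finset.disjoint_left.1 h.1
  have dAB' := Finset.disjoint_left.1 h'.1
  have hxA := h.2.1
  have hxB := h.2.2
  have hxB' := h'.2.2
  have hab : a ≠ b := fun e => dAB ha (e ▸ hb)
  have hax : a ≠ x := fun e => hxA (e ▸ ha)
  have hbx : b ≠ x := fun e => hxB (e ▸ hb)
  have d1 : Disjoint B.1 C.1 := by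
    rw [Finset.disjoint_left]; intro z hz hzc
    rcases (hC z).1 hzc with rfl | ⟨-, h2⟩
    · exact hxB hz
    · exact dAB h2 hz
  have d2 : Disjoint C.1 B'.1 := by
    rw [Finset.disjoint_left]; intro z hz hzc
    rcases (hC z).1 hz with rfl | ⟨h1, h2⟩
    · exact hxB' hzc
    · exact dAB' ((hA' z).2 (Or.inr ⟨h1, h2⟩)) hzc
  have d3 : Disjoint A.1 D.1 := by
    rw [Finset.disjoint_left]; intro z hz hzc
    rcases (hD z).1 hzc with rfl | ⟨-, h2⟩
    · exact hxA hz
    · exact dAB hz h2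
  have d4 : Disjoint D.1 A'.1 := by
    rw [Finset.disjoint_left]; intro z hz hzc
    rcases (hD z).1 hz with rfl | ⟨h1, h2⟩
    · exact h'.2.1 hzc
    · rcases (hA' z).1 hzc with h3 | ⟨-, h3⟩
      · exact h1 h3
      · exact dAB h3 h2
  have n1 : C ≠ A := fun e => hxA (e ▸ (hC x).2 (Or.inl rfl))
  have n2 : D ≠ B := fun e => hxB (e ▸ (hD x).2 (Or.inl rfl))
  have y1 : y ∈ (φ C).1 := eq_of_disjoint_of_missed hy (hφ _ _ d1) (hinj.ne n1)
  have y2 : y ∈ (φ D).1 := eq_of_disjoint_of_missed hy.symm (hφ _ _ d3) (hinj.ne n2)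
  exact ⟨hφ _ _ h'.1, Finset.disjoint_left.1 (hφ _ _ d4) y2, Finset.disjoint_left.1 (hφ _ _ d2) y1⟩

lemma missed_unique_right {k : ℕ} {A B B' : OddV k} {x} (h : Missed A B x) (h' : Missed A B' x) :
    B' = B := by
  by_contra hne
  exact h'.2.2 (eq_of_disjoint_of_missed h.symm h'.1 hne)

lemma transport {k : ℕ} (φ : OddV k → OddV k) (hinj : Function.Injective φ)
    (hφ : ∀ A B : OddV k, Disjoint A.1 B.1 → Disjoint (φ A).1 (φ B).1) {x y}
    {A' B' : OddV k} (h' : Missed A' B' x) (m : ℕ) :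
    ∀ A B : OddV k, (A.1 \ A'.1).card = m → Missed A B x → Missed (φ A) (φ B) y →
      Missed (φ A') (φ B') y := by
  induction m with
  | zero =>
    intro A B hm h hy
    have hs : A.1 ⊆ A'.1 := by simpa using hm
    have e : A = A' := Subtype.ext (Finset.eq_of_subset_of_card_le hs (by rw [A.2, A'.2]))
    subst e
    rw [missed_unique_right h h']
    exact hy
  | succ m ih =>
    intro A B hm h hy
    have hcard : (A.1 \ A'.1).card = (A'.1 \ A.1).card :=
      Finset.card_sdiff_comm (A.2.trans A'.2.symm)
    obtain ⟨a, ha⟩ := Finset.card_pos.1 (by omega : 0 < (A.1 \ A'.1).card)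
    obtain ⟨b, hb⟩ := Finset.card_pos.1 (by omega : 0 < (A'.1 \ A.1).card)
    rw [Finset.mem_sdiff] at ha hb
    have hbx : b ≠ x := fun e => h'.2.1 (e ▸ hb.1)
    have hbB : b ∈ B.1 := by
      rcases h.cover b with h1 | h1 | h1
      · exact absurd h1 hbx
      · exact absurd h1 hb.2
      · exact h1
    obtain ⟨E, hE⟩ := oddV_swap A a b ha.1 hb.2
    have hxE : x ∉ E.1 := fun hx => by
      rcases (hE x).1 hx with h1 | h1
      · exact hbx h1.symm
      · exact h.2.1 h1.2
    obtain ⟨F, hF⟩ := exists_missed_of_notMem E x hxE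
    refine ih E F ?_ hF (step φ hinj hφ h ha.1 hbB hE hF hy)
    have : E.1 \ A'.1 = (A.1 \ A'.1).erase a := by
      ext z
      simp only [Finset.mem_sdiff, Finset.mem_erase, hE]
      constructor
      · rintro ⟨rfl | h1, h2⟩
        · exact absurd hb.1 h2
        · exact ⟨h1.1, h1.2, h2⟩
      · rintro ⟨h1, h2, h3⟩
        exact ⟨Or.inr ⟨h1, h2⟩, h3⟩
    rw [this, Finset.card_erase_of_mem (Finset.mem_sdiff.2 ha), hm]
    rfl

lemma involution_fixes {k : ℕ} (φ : OddV k → OddV k) (hinv : ∀ A, φ (φ A) = A)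
    (hφ : ∀ A B : OddV k, Disjoint A.1 B.1 → Disjoint (φ A).1 (φ B).1) :
    ∃ A, φ A = A := by
  have hinj : Function.Injective φ := Function.Involutive.injective hinv
  have key : ∀ x, ∃ y, ∀ A B : OddV k, Missed A B x → Missed (φ A) (φ B) y := by
    intro x
    obtain ⟨A, hA⟩ := exists_vertex_notMem (k := k) x
    obtain ⟨B, hB⟩ := exists_missed_of_notMem A x hA
    obtain ⟨y, hy⟩ := exists_missed_of_disjoint _ _ (hφ A B hB.1)
    exact ⟨y, fun A' B' h' => transport φ hinj hφ h' _ A B rfl hB hy⟩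
  choose σ hσ using key
  have hσσ : ∀ x, σ (σ x) = x := by
    intro x
    obtain ⟨A, hA⟩ := exists_vertex_notMem (k := k) x
    obtain ⟨B, hB⟩ := exists_missed_of_notMem A x hA
    have := hσ _ _ _ (hσ _ _ _ hB)
    rw [hinv, hinv] at this
    exact hB.unique this
  obtain ⟨T, hT, hTinv⟩ := exists_invariant k σ hσσ
  refine ⟨⟨T, hT⟩, Subtype.ext (Finset.eq_of_subset_of_card_le ?_ ?_)⟩
  · intro z hz
    by_contra hzT
    have h1 : σ z ∉ T := fun h => hzT (by simpa [hσσ] using hTinv _ h)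
    obtain ⟨B, hB⟩ := exists_missed_of_notMem (⟨T, hT⟩ : OddV k) (σ z) h1
    have := (hσ _ _ _ hB).2.1
    rw [hσσ] at this
    exact this hz
  · rw [(φ ⟨T, hT⟩).2]; exact hT.le

theorem odd_graph_not_cayley (k : ℕ) (hk : 1 < k)
    (h : ¬ ∃ t : ℕ, 2 ≤ t ∧ k = 2 ^ t - 1) :
    ¬ IsCayleyGraph (kneserGraph (2 * k + 1) k) := by
  rintro ⟨H, hH⟩
  obtain ⟨v0, -⟩ := exists_vertex_notMem (k := k) 0
  have hbij : Function.Bijective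
      (fun g : H => (g : kneserGraph (2 * k + 1) k ≃g kneserGraph (2 * k + 1) k) v0) := by
    constructor
    · intro g g' e
      exact (hH v0 _).unique e rfl
    · intro w
      exact (hH v0 w).exists
  have hcard : Nat.card H = (2 * k + 1).choose k := by
    rw [Nat.card_eq_of_bijective _ hbij, Nat.card_eq_fintype_card, Fintype.card_finset_len,
      Fintype.card_fin]
  have : Finite H := Finite.of_injective _ hbij.1
  have hdvd : 2 ∣ Nat.card H := by
    rw [hcard]
    apply two_dvd_choose_odd
    rintro ⟨t, ht⟩
    refine h ⟨t, ?_, by omega⟩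
    by_contra hlt
    have : t = 0 ∨ t = 1 := by omega
    rcases this with rfl | rfl <;> omega
  haveI : Fact (Nat.Prime 2) := ⟨Nat.prime_two⟩
  obtain ⟨g, hg⟩ := exists_prime_orderOf_dvd_card' 2 hdvd
  have hg2 : g * g = 1 := by rw [← pow_two]; exact orderOf_dvd_iff_pow_eq_one.1 hg.dvd
  have hg1 : g ≠ 1 := by
    rintro rfl
    simp at hg
  obtain ⟨A, hA⟩ := involution_fixes (k := k)
    (fun v => (g : kneserGraph (2 * k + 1) k ≃g kneserGraph (2 * k + 1) k) v)
    (fun A => by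
      have := congrArg (fun f : H =>
        (f : kneserGraph (2 * k + 1) k ≃g kneserGraph (2 * k + 1) k) A) hg2
      exact this)
    (fun A B hd => by
      rw [← kneser_adj k hk] at hd ⊢
      exact (SimpleGraph.Iso.map_adj_iff _).2 hd)
  exact hg1 ((hH A A).unique hA rfl)
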